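/- Let K ∈ ℕ, and for each k let X_k be a real inner product space and V_k ⊆ X_k a convex set; let X = ∏_k X_k (with the product inner product) and C = ∏_k V_k. For each k let u_k : X → ℝ be such that for every x ∈ X the function y ↦ u_k(x with its k-th component replaced by y) is convex and differentiable on X_k, and let ∇_k u_k(x) ∈ X_k denote the gradient of this function at x_k. Define F : X → X by F(x) = (∇_1 u_1(x), …, ∇_K u_K(x)). Then a point x∘ ∈ C is a Nash equilibrium, i.e., for every k and every y ∈ V_k one has u_k(x∘ with its k-th component replaced by y) ≥ u_k(x∘), if and only if x∘ is a solution of the variational inequality VI(F, C). -/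

import Mathlib

open RealInnerProductSpace

/-!
A Nash equilibrium asks each player's component to minimize a convex function over a convex set,
which by the first-order optimality condition is a variational inequality for that player alone.
Since the inner product on the product space is a sum over the players, the variational
inequality on `∏ k, V k` splits into exactly these single-player inequalities: perturbing one
component at a time isolates each summand, and summing recombines them.
-/

section FirstOrderOptimality

variable {E : Type*} [NormedAddCommGroup E] [NormedSpace ℝ E]
  {f : E → ℝ} {f' : E →L[ℝ] ℝ} {s : Set E} {a b : E}

theorem apply_sub_le_sub_of_convexOn_of_hasFDerivWithinAt (hconv : ConvexOn ℝ s f)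
    (hf : HasFDerivWithinAt f f' s a) (ha : a ∈ s) (hb : b ∈ s) : f' (b - a) ≤ f b - f a := by
  let γ : ℝ →ᵃ[ℝ] E := AffineMap.lineMap a b
  have hγ₀ : γ 0 = a := AffineMap.lineMap_apply_zero a b
  have hγ₁ : γ 1 = b := AffineMap.lineMap_apply_one a b
  have hderiv : HasDerivWithinAt (f ∘ γ) (f' (b - a)) (γ ⁻¹' s) 0 :=
    hf.comp_hasDerivWithinAt_of_eq 0 AffineMap.hasDerivWithinAt_lineMap (Set.mapsTo_preimage γ s)
      hγ₀.symm
  have hslope : f' (b - a) ≤ slope (f ∘ γ) 0 1 :=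
    (hconv.comp_affineMap γ).le_slope_of_hasDerivWithinAt (by simpa [hγ₀] using ha)
      (by simpa [hγ₁] using hb) one_pos hderiv
  simpa [slope_def_field, hγ₀, hγ₁] using hslope

theorem isMinOn_iff_forall_apply_sub_nonneg (hconv : ConvexOn ℝ s f)
    (hf : HasFDerivWithinAt f f' s a) (ha : a ∈ s) :
    IsMinOn f s a ↔ ∀ y ∈ s, 0 ≤ f' (y - a) := by
  constructor
  · intro hmin y hy
    exact hmin.localize.hasFDerivWithinAt_nonneg hf
      (sub_mem_posTangentConeAt_of_segment_subset (hconv.1.segment_subset ha hy))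
  · intro hnonneg y hy
    exact sub_nonneg.mp ((hnonneg y hy).trans
      (apply_sub_le_sub_of_convexOn_of_hasFDerivWithinAt hconv hf ha hy))

end FirstOrderOptimality

theorem forall_mem_pi_sum_nonneg_iff {ι M : Type*} {α : ι → Type*} [Fintype ι]
    [AddCommMonoid M] [Preorder M] [AddLeftMono M] {s : ∀ i, Set (α i)} {g : ∀ i, α i → M}
    {a : ∀ i, α i} (ha : ∀ i, a i ∈ s i) (hg : ∀ i, g i (a i) = 0) :
    (∀ x : ∀ i, α i, (∀ i, x i ∈ s i) → 0 ≤ ∑ i, g i (x i)) ↔ ∀ i, ∀ y ∈ s i, 0 ≤ g i y := by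
  classical
  constructor
  · intro hsum i y hy
    have hmem : ∀ j, Function.update a i y j ∈ s j :=
      (Function.forall_update_iff a fun j z => z ∈ s j).mpr ⟨hy, fun j _ => ha j⟩
    have hsingle : ∑ j, g j (Function.update a i y j) = g i y := by
      rw [Fintype.sum_eq_single i fun j hj => by rw [Function.update_of_ne hj, hg],
        Function.update_self]
    exact hsingle ▸ hsum _ hmem
  · exact fun hnonneg x hx => Finset.sum_nonneg fun i _ => hnonneg i (x i) (hx i)

/-- `x` is a solution of the variational inequality `VI(F, C)`. -/
def IsVISolution {E : Type*} [NormedAddCommGroup E] [InnerProductSpace ℝ E]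
    (F : E → E) (C : Set E) (x : E) : Prop :=
  x ∈ C ∧ ∀ y ∈ C, 0 ≤ ⟪F x, y - x⟫

/-- `x` is a Nash equilibrium of the game in which player `k` chooses an action in `V k` and
incurs the cost `u k`; costs are to be minimized. -/
def IsNashEquilibrium {ι β : Type*} {X : ι → Type*} [DecidableEq ι] [LE β]
    (V : ∀ k, Set (X k)) (u : ι → (∀ k, X k) → β) (x : ∀ k, X k) : Prop :=
  (∀ k, x k ∈ V k) ∧ ∀ k, ∀ y ∈ V k, u k x ≤ u k (Function.update x k y)

theorem isNashEquilibrium_iff_isMinOn {ι β : Type*} {X : ι → Type*} [DecidableEq ι] [Preorder β]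
    {V : ∀ k, Set (X k)} {u : ι → (∀ k, X k) → β} {x : ∀ k, X k} :
    IsNashEquilibrium V u x ↔
      (∀ k, x k ∈ V k) ∧ ∀ k, IsMinOn (fun y => u k (Function.update x k y)) (V k) (x k) := by
  simp only [IsNashEquilibrium, isMinOn_iff, Function.update_eq_self]

section ProductSpace

variable {ι : Type*} [Fintype ι] {X : ι → Type*}
  [∀ k, NormedAddCommGroup (X k)] [∀ k, InnerProductSpace ℝ (X k)]
  {V : ∀ k, Set (X k)} {F : PiLp 2 X → PiLp 2 X} {x₀ : PiLp 2 X}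

theorem isVISolution_pi_iff :
    IsVISolution F {x | ∀ k, x k ∈ V k} x₀ ↔
      (∀ k, x₀ k ∈ V k) ∧ ∀ k, ∀ y ∈ V k, 0 ≤ ⟪F x₀ k, y - x₀ k⟫ := by
  refine and_congr_right fun hx₀ => ?_
  rw [← forall_mem_pi_sum_nonneg_iff (g := fun k y => ⟪F x₀ k, y - x₀ k⟫) hx₀ (by simp),
    (WithLp.equiv 2 (∀ k, X k)).symm.forall_congr_left]
  simp [PiLp.inner_apply]

theorem stmt_3_general [DecidableEq ι] {u : ι → (∀ k, X k) → ℝ}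
    (hconv : ∀ k, ConvexOn ℝ (V k) fun y => u k (Function.update x₀ k y))
    (hgrad : ∀ k, HasFDerivWithinAt (fun y => u k (Function.update x₀ k y))
      (innerSL ℝ (F x₀ k)) (V k) (x₀ k)) :
    IsNashEquilibrium V u x₀ ↔ IsVISolution F {x | ∀ k, x k ∈ V k} x₀ := by
  rw [isNashEquilibrium_iff_isMinOn, isVISolution_pi_iff]
  refine and_congr_right fun hx₀ => forall_congr' fun k => ?_
  simpa only [innerSL_apply_apply] using
    isMinOn_iff_forall_apply_sub_nonneg (hconv k) (hgrad k) (hx₀ k)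

end ProductSpace

/-- Nash equilibria coincide with solutions of the variational inequality for the game
gradient.  Here `X k` are the players' strategy spaces, `V k ⊆ X k` the convex action
sets, `u k` the cost functions (each convex and differentiable in the player's own
variable, with partial gradient `G k x`, witnessed via `HasFDerivAt` with derivative
`⟪G k x, ·⟫`), and the game gradient `F : ∏ k, X k → ∏ k, X k` is
`F x = (G 1 x, …, G K x)`.  A point `x₀` in `C = ∏ k, V k` is a Nash equilibrium iff it
solves `VI(F, C)` with respect to the product inner product (`PiLp 2`). -/
theorem stmt_3 {K : ℕ} {X : Fin K → Type*}
    [∀ k, NormedAddCommGroup (X k)] [∀ k, InnerProductSpace ℝ (X k)]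
    (V : ∀ k, Set (X k)) (hV : ∀ k, Convex ℝ (V k))
    (u : ∀ _ : Fin K, (∀ j, X j) → ℝ)
    (G : ∀ k : Fin K, (∀ j, X j) → X k)
    (hconv : ∀ (k) (x : ∀ j, X j),
      ConvexOn ℝ Set.univ (fun y : X k => u k (Function.update x k y)))
    (hgrad : ∀ (k) (x : ∀ j, X j),
      HasFDerivAt (fun y : X k => u k (Function.update x k y)) (innerSL ℝ (G k x)) (x k))
    (F : PiLp 2 X → PiLp 2 X) (hF : ∀ (x : PiLp 2 X) (k : Fin K), F x k = G k x)
    (x₀ : PiLp 2 X) (hx₀ : ∀ k, x₀ k ∈ V k) :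
    (∀ k, ∀ y ∈ V k, u k x₀ ≤ u k (Function.update x₀ k y)) ↔
      ((∀ k, x₀ k ∈ V k) ∧
        ∀ x : PiLp 2 X, (∀ k, x k ∈ V k) → 0 ≤ ⟪F x₀, x - x₀⟫) :=
  (and_iff_right hx₀).symm.trans <| stmt_3_general
    (fun k => (hconv k x₀).subset (Set.subset_univ _) (hV k))
    (fun k => hF x₀ k ▸ (hgrad k x₀).hasFDerivWithinAt)
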